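/- Let Γ > 0, δ² > 0, M ≥ 1, and for 1 ≤ m ≤ M set V_m = V_max/(1+Γ)^{M-m} with V_max > 0. Then for every 2 ≤ m ≤ M, ∑_{x=1}^{m-1} V_x = V_1·((1+Γ)^{m-1} − 1)/Γ where V_1 = V_max/(1+Γ)^{M-1}, and the SIC feasibility condition V_m ≥ Γ(∑_{x=1}^{m-1} V_x + δ²) holds if and only if V_1 ≥ Γδ², i.e., if and only if V_max ≥ δ²Γ(1+Γ)^{M-1}. -/

import Mathlib

/-- For the top-anchored geometric design V_m = V_max/(1+Γ)^{M-m}: the partial sums have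
closed form V_1((1+Γ)^{m-1} − 1)/Γ, and the SIC feasibility condition at each level
2 ≤ m ≤ M holds iff V_1 ≥ Γδ², iff V_max ≥ δ²Γ(1+Γ)^{M-1}. -/
theorem stmt_12 (Γ δ2 Vmax : ℝ) (hΓ : 0 < Γ) (hδ : 0 < δ2) (hVmax : 0 < Vmax)
    (M : ℕ) (hM : 1 ≤ M) (V : ℕ → ℝ)
    (hV : ∀ m : ℕ, 1 ≤ m → m ≤ M → V m = Vmax / (1 + Γ) ^ (M - m)) :
    V 1 = Vmax / (1 + Γ) ^ (M - 1) ∧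
    (∀ m : ℕ, 2 ≤ m → m ≤ M →
      (∑ x ∈ Finset.Icc 1 (m - 1), V x = V 1 * ((1 + Γ) ^ (m - 1) - 1) / Γ) ∧
      (V m ≥ Γ * ((∑ x ∈ Finset.Icc 1 (m - 1), V x) + δ2) ↔ V 1 ≥ Γ * δ2) ∧
      (V 1 ≥ Γ * δ2 ↔ Vmax ≥ δ2 * Γ * (1 + Γ) ^ (M - 1))) := by
  have hp : (0 : ℝ) < 1 + Γ := by linarith
  have h1 := hV 1 le_rfl hM
  have hg : ∀ k : ℕ, k + 1 ≤ M → V (k + 1) = V 1 * (1 + Γ) ^ k := by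
    intro k hk
    rw [hV (k + 1) (by omega) hk, h1]
    have e : M - 1 = (M - (k + 1)) + k := by omega
    rw [e, pow_add]
    field_simp
  have hs : ∀ k : ℕ, k + 1 ≤ M →
      ∑ x ∈ Finset.Icc 1 k, V x = V 1 * ((1 + Γ) ^ k - 1) / Γ := by
    intro k
    induction k with
    | zero => intro _; simp
    | succ n ih =>
      intro hk
      rw [Finset.sum_Icc_succ_top (by omega), ih (by omega), hg n (by omega), pow_succ]
      field_simp
      ring
  refine ⟨h1, fun m hm hmM => ?_⟩
  obtain ⟨k, rfl⟩ : ∃ k, m = k + 1 := ⟨m - 1, by omega⟩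
  simp only [Nat.add_sub_cancel]
  refine ⟨hs k hmM, ?_, ?_⟩
  · rw [hs k hmM, hg k hmM]
    have e : Γ * (V 1 * ((1 + Γ) ^ k - 1) / Γ + δ2)
        = V 1 * (1 + Γ) ^ k - V 1 + Γ * δ2 := by
      field_simp
    rw [e]
    constructor <;> intro h <;> linarith
  · rw [h1, ge_iff_le, le_div_iff₀ (pow_pos hp _), mul_comm Γ δ2]
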